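/- Let γ(t) = (t,t²,t³) and let T : ℝ³ → ℝ³ be the linear map T(x,y,z) = (y/2, (x − z/6)/√2, (x + z/6)/√2). There is a universal constant K ≥ 1 such that the following holds. Let ρ ≥ 1 be an integer, let 0 ≤ l < ρ be an integer, set t = l/ρ, define ω ∈ [π/4, π/2] by (cos ω, sin ω) = (2√2 t/(2 + t²), (2 − t²)/(2 + t²)), and set u = (cos ω, sin ω, 1), v = (sin ω, −cos ω, 0), w = (cos ω, sin ω, −1). Let τ be the l-th canonical moment curve block at scale ρ, let c ≥ 1, and let r > 0 satisfy K c ρ^{−3} ≤ r^{−1}/4. Then T(cτ − cτ) ∩ {(ξ₁,ξ₂,ξ₃) : r^{−1}/2 ≤ ξ₃ ≤ r^{−1}} ⊆ {A' u + B' v + C' w : r^{−1}/4 ≤ A' ≤ 2 r^{−1}, |B'| ≤ K c ρ^{−2}, |C'| ≤ K c ρ^{−3}}. -/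

import Mathlib

open Real Set MeasureTheory
open scoped Pointwise

noncomputable section

/-- The `l`-th canonical moment curve block at scale `ρ`. -/
def canBlock (ρ l : ℕ) : Set (Fin 3 → ℝ) :=
  {ξ | (l : ℝ) / ρ ≤ ξ 0 ∧ ξ 0 < ((l : ℝ) + 1) / ρ ∧
       |ξ 1 - (ξ 0)^2| ≤ ((ρ:ℝ)⁻¹)^2 ∧
       |ξ 2 - 3*(ξ 0)*(ξ 1) + 2*(ξ 0)^3| ≤ ((ρ:ℝ)⁻¹)^3}

/-- The centroid (center of mass) of a set `A ⊆ ℝ³`. -/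
def ctr (A : Set (Fin 3 → ℝ)) : Fin 3 → ℝ :=
  (volume A).toReal⁻¹ • ∫ x in A, x

/-- The dilate of `A` by the factor `c` about its centroid. -/
def dilate (c : ℝ) (A : Set (Fin 3 → ℝ)) : Set (Fin 3 → ℝ) :=
  (fun x => ctr A + c • (x - ctr A)) '' A

/-- The linear map `T(x,y,z) = (y/2, (x − z/6)/√2, (x + z/6)/√2)`. -/
def Tmap (x : Fin 3 → ℝ) : Fin 3 → ℝ :=
  ![x 1 / 2, (x 0 - x 2 / 6) / Real.sqrt 2, (x 0 + x 2 / 6) / Real.sqrt 2]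

set_option maxHeartbeats 1000000

theorem block_coords {ρ l : ℕ} {x : Fin 3 → ℝ} (hx : x ∈ canBlock ρ l) (hρ : 1 ≤ ρ) :
    ∃ a b k : ℝ, |b| ≤ 2 * ((ρ:ℝ)⁻¹)^2 ∧ |k| ≤ 5 * ((ρ:ℝ)⁻¹)^3 ∧
      x 0 = (l:ℝ)/ρ + a ∧ x 1 = ((l:ℝ)/ρ)^2 + 2 * ((l:ℝ)/ρ) * a + b ∧
      x 2 = ((l:ℝ)/ρ)^3 + 3 * ((l:ℝ)/ρ)^2 * a + 3 * ((l:ℝ)/ρ) * b + k := by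
  obtain ⟨h1, h2, h3, h4⟩ := hx
  have hδ : 0 < (ρ:ℝ)⁻¹ := by positivity
  rw [add_div, one_div] at h2
  set t : ℝ := (l:ℝ)/ρ
  set δ : ℝ := (ρ:ℝ)⁻¹
  set a := x 0 - t with ha
  set p := x 1 - (x 0)^2 with hp
  set q := x 2 - 3*(x 0)*(x 1) + 2*(x 0)^3 with hq
  have ha0 : |a| ≤ δ := abs_le.2 ⟨by linarith, by linarith⟩
  have ha2 : |a^2| ≤ δ^2 := by rw [abs_pow]; gcongr
  have ha3 : |a^3| ≤ δ^3 := by rw [abs_pow]; gcongr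
  have hap : |a * p| ≤ δ^3 := by
    rw [abs_mul]
    calc |a| * |p| ≤ δ * δ^2 := by gcongr
      _ = δ^3 := by ring
  rw [abs_le] at ha2 ha3 hap h3 h4
  refine ⟨a, a^2 + p, a^3 + 3 * (a * p) + q, abs_le.2 ⟨by linarith, by linarith⟩,
    abs_le.2 ⟨by linarith, by linarith⟩, by simp [ha], ?_, ?_⟩
  · rw [hp, ha]; ring
  · rw [hq, hp, ha]; ring

/-- **(From the proof of Proposition 2.13.)** The slab-restricted image under `T` of the
difference set of a dilated canonical moment curve block lies in the neighborhood of a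
canonical cone block in the frame `(u,v,w)` at the corresponding angle `ω`. -/
theorem canonical_block_to_cone_block :
    ∃ K : ℝ, 1 ≤ K ∧
    ∀ ρ : ℕ, 1 ≤ ρ → ∀ l : ℕ, l < ρ →
    ∀ ω : ℝ, ω ∈ Set.Icc (π/4) (π/2) →
    Real.cos ω = 2 * Real.sqrt 2 * ((l:ℝ)/ρ) / (2 + ((l:ℝ)/ρ)^2) →
    Real.sin ω = (2 - ((l:ℝ)/ρ)^2) / (2 + ((l:ℝ)/ρ)^2) →
    ∀ c : ℝ, 1 ≤ c → ∀ r : ℝ, 0 < r → K * c * ((ρ:ℝ)⁻¹)^3 ≤ r⁻¹ / 4 →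
    (Tmap '' (dilate c (canBlock ρ l) - dilate c (canBlock ρ l))) ∩
        {ξ : Fin 3 → ℝ | r⁻¹ / 2 ≤ ξ 2 ∧ ξ 2 ≤ r⁻¹} ⊆
      {ξ | ∃ A' B' C' : ℝ, r⁻¹ / 4 ≤ A' ∧ A' ≤ 2 * r⁻¹ ∧
           |B'| ≤ K * c * ((ρ:ℝ)⁻¹)^2 ∧ |C'| ≤ K * c * ((ρ:ℝ)⁻¹)^3 ∧
           ξ = A' • ![Real.cos ω, Real.sin ω, 1] + B' • ![Real.sin ω, -Real.cos ω, 0]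
               + C' • ![Real.cos ω, Real.sin ω, -1]} := by
  refine ⟨20, by norm_num, ?_⟩
  intro ρ hρ l hl ω _ hC hS c hc r hr hK
  rintro ξ ⟨⟨d, ⟨_, ⟨x, hx, rfl⟩, _, ⟨y, hy, rfl⟩, hd⟩, rfl⟩, hξ1, hξ2⟩
  obtain ⟨a, b, k, hb, hk, x0, x1, x2⟩ := block_coords hx hρ
  obtain ⟨a', b', k', hb', hk', y0, y1, y2⟩ := block_coords hy hρ
  have hδ : 0 < (ρ:ℝ)⁻¹ := by positivity
  have hδ1 : (ρ:ℝ)⁻¹ ≤ 1 := inv_le_one_of_one_le₀ (by exact_mod_cast hρ)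
  have ht0 : 0 ≤ (l:ℝ)/ρ := by positivity
  have ht1 : (l:ℝ)/ρ ≤ 1 := by
    rw [div_le_one (by positivity)]; exact_mod_cast hl.le
  set t : ℝ := (l:ℝ)/ρ
  set δ : ℝ := (ρ:ℝ)⁻¹
  have hD : 0 < 2 + t^2 := by positivity
  have hs : √2 * √2 = 2 := Real.mul_self_sqrt (by norm_num)
  have hs0 : 0 < √2 := by positivity
  have hs2 : √2 ≤ 2 := by nlinarith
  have hCS := Real.sin_sq_add_cos_sq ω
  rw [eq_div_iff hD.ne'] at hC hS
  have hdiv : ∀ z : ℝ, z / √2 = z * (√2 / 2) := by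
    intro z; rw [div_eq_iff hs0.ne']; linear_combination (-z/2) * hs
  have d0 : d 0 = c * (a - a') := by
    simp only [← hd, Pi.sub_apply, Pi.add_apply, Pi.smul_apply, smul_eq_mul, x0, y0]; ring
  have d1 : d 1 = c * (2 * t * (a - a') + (b - b')) := by
    simp only [← hd, Pi.sub_apply, Pi.add_apply, Pi.smul_apply, smul_eq_mul, x1, y1]; ring
  have d2 : d 2 = c * (3 * t^2 * (a - a') + 3 * t * (b - b') + (k - k')) := by
    simp only [← hd, Pi.sub_apply, Pi.add_apply, Pi.smul_apply, smul_eq_mul, x2, y2]; ring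
  have hβ : |b - b'| ≤ 4 * δ^2 := (abs_sub _ _).trans (by linarith)
  have hκ : |k - k'| ≤ 10 * δ^3 := (abs_sub _ _).trans (by linarith)
  have T0 : Tmap d 0 = d 1 / 2 := by simp [Tmap]
  have T1 : Tmap d 1 = (d 0 - d 2 / 6) * (√2 / 2) := by rw [← hdiv]; simp [Tmap]
  have T2 : Tmap d 2 = (d 0 + d 2 / 6) * (√2 / 2) := by rw [← hdiv]; simp [Tmap]
  clear hd
  generalize Tmap d = ξ at *
  generalize b - b' = β at *
  generalize k - k' = κ at *
  generalize a - a' = α at *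
  simp only [mem_ofPred_eq] at hξ1 hξ2 ⊢
  generalize Real.cos ω = C at *
  generalize Real.sin ω = S at *
  have hc0 : 0 < c := by linarith
  have hCeq : (ξ 0 * C + ξ 1 * S - ξ 2) / 2 = -(c * κ * (√2 / (6 * (2 + t^2)))) := by
    have : (ξ 0 * C + ξ 1 * S - ξ 2) / 2 * (2 + t^2) = -(c * κ * (√2 / 6)) := by
      rw [T0, T1, T2, d0, d1, d2]
      linear_combination (c * (2 * t * α + β)) / 4 * hC +
        (c * α - c * (3 * t^2 * α + 3 * t * β + κ) / 6) * (√2 / 4) * hS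
    rw [← eq_div_iff hD.ne'] at this
    rw [this]; field_simp
  have hBeq : ξ 0 * S - ξ 1 * C = c * (β / 2 + κ * (t / (3 * (2 + t^2)))) := by
    have : (ξ 0 * S - ξ 1 * C) * (2 + t^2) = c * (β * (2 + t^2) / 2 + κ * t / 3) := by
      rw [T0, T1, d0, d1, d2]
      linear_combination (c * (2 * t * α + β)) / 2 * hS -
        (c * α - c * (3 * t^2 * α + 3 * t * β + κ) / 6) * (√2 / 2) * hC -
        (c * α - c * (3 * t^2 * α + 3 * t * β + κ) / 6) * t * hs
    rw [← eq_div_iff hD.ne'] at this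
    rw [this]; field_simp
  have hf1 : |√2 / (6 * (2 + t^2))| ≤ 1 := by
    rw [abs_of_nonneg (by positivity), div_le_one (by positivity)]; linarith [sq_nonneg t]
  have hf2 : |t / (3 * (2 + t^2))| ≤ 1 := by
    rw [abs_of_nonneg (by positivity), div_le_one (by positivity)]; linarith [sq_nonneg t]
  have hCb : |(ξ 0 * C + ξ 1 * S - ξ 2) / 2| ≤ 20 * c * δ^3 := by
    rw [hCeq, abs_neg, abs_mul, abs_mul, abs_of_pos hc0]
    calc c * |κ| * _ ≤ c * (10 * δ^3) * 1 := by gcongr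
      _ ≤ 20 * c * δ^3 := by linarith [mul_pos hc0 (pow_pos hδ 3)]
  have hBb : |ξ 0 * S - ξ 1 * C| ≤ 20 * c * δ^2 := by
    have h1 : |κ * (t / (3 * (2 + t^2)))| ≤ 10 * δ^2 := by
      rw [abs_mul]
      calc |κ| * _ ≤ (10 * δ^3) * 1 := by gcongr
        _ ≤ 10 * δ^2 := by linarith [mul_le_mul_of_nonneg_left hδ1 (sq_nonneg δ), pow_succ δ 2]
    have h2 : |β / 2 + κ * (t / (3 * (2 + t^2)))| ≤ 20 * δ^2 := by
      have := pow_pos hδ 2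
      rw [abs_le] at h1 hβ ⊢
      constructor <;> linarith
    rw [hBeq, abs_mul, abs_of_pos hc0]
    calc c * _ ≤ c * (20 * δ^2) := by gcongr
      _ = _ := by ring
  have hCb' := abs_le.1 (hCb.trans hK)
  have hr' : 0 < r⁻¹ := by positivity
  refine ⟨(ξ 0 * C + ξ 1 * S + ξ 2) / 2, ξ 0 * S - ξ 1 * C, (ξ 0 * C + ξ 1 * S - ξ 2) / 2,
    by linarith, by linarith, hBb, hCb, ?_⟩
  ext i
  fin_cases i
  · simp
    linear_combination (-ξ 0) * hCS
  · simp
    linear_combination (-ξ 1) * hCS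
  · simp
    ring
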